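/- Suppose s(v) ≥ OPT(k,l) for every vertex v of G, and suppose X ≠ ∅. Then γ ≥ α/2, where γ = min_{x ∈ X} ρ⁻_Y(x) and α = μ(X). -/

import Mathlib

open scoped BigOperators

/-- The arc relation of the oriented star `S_{k,l}` on `Fin (k+l+1)`:
vertex `0` is the center, vertices `1,…,k` are the out-leaves and
vertices `k+1,…,k+l` are the in-leaves. -/
def StarArc (k l : ℕ) (a b : Fin (k + l + 1)) : Prop :=
  (a.val = 0 ∧ 1 ≤ b.val ∧ b.val ≤ k) ∨ (b.val = 0 ∧ k + 1 ≤ a.val)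

/-- `φ` witnesses an induced copy of `S_{k,l}` in the digraph with arc relation `A`:
it is injective and maps arcs to arcs and non-arcs to non-arcs. -/
def IsStarEmb (k l : ℕ) {V : Type*} (A : V → V → Prop) (φ : Fin (k + l + 1) → V) : Prop :=
  Function.Injective φ ∧ ∀ a b, StarArc k l a b ↔ A (φ a) (φ b)

/-- `s(G)`: the probability that a uniformly random map `V(S_{k,l}) → V(G)`
induces a copy of `S_{k,l}`. -/
noncomputable def starProb (k l : ℕ) (V : Type*) [Fintype V] (A : V → V → Prop) : ℝ :=
  (Nat.card {φ : Fin (k + l + 1) → V // IsStarEmb k l A φ} : ℝ) /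
    (Fintype.card V : ℝ) ^ (k + l + 1)

/-- The probability that a uniformly random map induces a copy of `S_{k,l}`
and moreover has property `P`. -/
noncomputable def starProbOn (k l : ℕ) {V : Type*} [Fintype V] (A : V → V → Prop)
    (P : (Fin (k + l + 1) → V) → Prop) : ℝ :=
  (Nat.card {φ : Fin (k + l + 1) → V // IsStarEmb k l A φ ∧ P φ} : ℝ) /
    (Fintype.card V : ℝ) ^ (k + l + 1)

/-- `s(z→v) = Pr[φ ∈ 𝒮 | φ z = v]`. -/
noncomputable def sCond (k l : ℕ) {V : Type*} [Fintype V] (A : V → V → Prop)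
    (z : Fin (k + l + 1)) (v : V) : ℝ :=
  (Nat.card {φ : Fin (k + l + 1) → V // IsStarEmb k l A φ ∧ φ z = v} : ℝ) /
    (Fintype.card V : ℝ) ^ (k + l)

/-- `Pr[φ ∈ 𝒮 ∧ P φ | φ(c) = v]`, where `c = 0` is the center of the star. -/
noncomputable def sCondOn (k l : ℕ) {V : Type*} [Fintype V] (A : V → V → Prop) (v : V)
    (P : (Fin (k + l + 1) → V) → Prop) : ℝ :=
  (Nat.card {φ : Fin (k + l + 1) → V // IsStarEmb k l A φ ∧ φ 0 = v ∧ P φ} : ℝ) /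
    (Fintype.card V : ℝ) ^ (k + l)

/-- `s(v) = (s(c→v) + l·s(i→v) + k·s(o→v))/(m+1)`, where the center is `0`,
`k+1` is an in-leaf and `1` is an out-leaf. -/
noncomputable def sVert (k l : ℕ) {V : Type*} [Fintype V] (A : V → V → Prop) (v : V) : ℝ :=
  (sCond k l A 0 v + l * sCond k l A (Fin.ofNat (k + l + 1) (k + 1)) v
      + k * sCond k l A 1 v) / ((k : ℝ) + l + 1)

/-- `ρ(v)`: the proportion of vertices adjacent to `v`. -/
noncomputable def rho {V : Type*} [Fintype V] (A : V → V → Prop) (v : V) : ℝ :=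
  (Nat.card {u : V // A v u ∨ A u v} : ℝ) / (Fintype.card V : ℝ)

/-- `ρ⁺_B(v)`: the proportion of vertices that are out-neighbours of `v` lying in `B`. -/
noncomputable def rhoPIn {V : Type*} [Fintype V] (A : V → V → Prop) (B : Set V) (v : V) : ℝ :=
  (Nat.card {u : V // A v u ∧ u ∈ B} : ℝ) / (Fintype.card V : ℝ)

/-- `ρ⁻_B(v)`: the proportion of vertices that are in-neighbours of `v` lying in `B`. -/
noncomputable def rhoMIn {V : Type*} [Fintype V] (A : V → V → Prop) (B : Set V) (v : V) : ℝ :=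
  (Nat.card {u : V // A u v ∧ u ∈ B} : ℝ) / (Fintype.card V : ℝ)

/-- `ρ_B(v)`: the proportion of vertices adjacent to `v` lying in `B`. -/
noncomputable def rhoIn {V : Type*} [Fintype V] (A : V → V → Prop) (B : Set V) (v : V) : ℝ :=
  (Nat.card {u : V // (A v u ∨ A u v) ∧ u ∈ B} : ℝ) / (Fintype.card V : ℝ)

/-- `μ(B) = |B|/n`. -/
noncomputable def muSet {V : Type*} [Fintype V] (B : Set V) : ℝ :=
  (Nat.card B : ℝ) / (Fintype.card V : ℝ)

/-- `X`: the set of vertices of large degree, `ρ(v) ≥ 1/2`. -/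
def bigX {V : Type*} [Fintype V] (A : V → V → Prop) : Set V := {v | 1 / 2 ≤ rho A v}

/-- `Y = V(G) \ X`. -/
def bigY {V : Type*} [Fintype V] (A : V → V → Prop) : Set V := (bigX A)ᶜ

/-- `α = μ(X)`. -/
noncomputable def alphaX {V : Type*} [Fintype V] (A : V → V → Prop) : ℝ := muSet (bigX A)

/-- `D = min_{x ∈ X} ρ(x)`. -/
noncomputable def Dmin {V : Type*} [Fintype V] (A : V → V → Prop) : ℝ :=
  sInf (rho A '' bigX A)

/-- `β = max_{y ∈ Y} ρ_Y(y)`. -/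
noncomputable def betaY {V : Type*} [Fintype V] (A : V → V → Prop) : ℝ :=
  sSup ((fun y => rhoIn A (bigY A) y) '' bigY A)

/-- `γ = min_{x ∈ X} ρ⁻_Y(x)`. -/
noncomputable def gammaX {V : Type*} [Fintype V] (A : V → V → Prop) : ℝ :=
  sInf ((fun x => rhoMIn A (bigY A) x) '' bigX A)

/-- `S = (m+1)·min_{v ∈ V(G)} s(v)`. -/
noncomputable def Smin (k l : ℕ) {V : Type*} [Fintype V] (A : V → V → Prop) : ℝ :=
  ((k : ℝ) + l + 1) * sInf (Set.range (sVert k l A))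

/-- `S₁ = min_{x ∈ X} (ρ⁺_Y(x))^k (ρ⁻_Y(x))^l`. -/
noncomputable def S1min (k l : ℕ) {V : Type*} [Fintype V] (A : V → V → Prop) : ℝ :=
  sInf ((fun x => rhoPIn A (bigY A) x ^ k * rhoMIn A (bigY A) x ^ l) '' bigX A)

/-- `S₂ = S₁ − ((m−1)/((m+1)·C(m,k)))·(α+β)(1−α)(1−D)^{m−2}`. -/
noncomputable def S2min (k l : ℕ) {V : Type*} [Fintype V] (A : V → V → Prop) : ℝ :=
  S1min k l A - (((k : ℝ) + l - 1) / (((k : ℝ) + l + 1) * (Nat.choose (k + l) k : ℝ)))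
    * (alphaX A + betaY A) * (1 - alphaX A) * (1 - Dmin A) ^ (k + l - 2)

/-- `λ₀ = k^k l^l / m^m`. -/
noncomputable def lam0 (k l : ℕ) : ℝ := (k : ℝ) ^ k * (l : ℝ) ^ l / ((k : ℝ) + l) ^ (k + l)

/-- `λ₁ = k^k l (l−1)^{l−1} / (m−1)^{m−1}` (with the convention `0⁰ = 1`). -/
noncomputable def lam1 (k l : ℕ) : ℝ :=
  (k : ℝ) ^ k * (l : ℝ) * ((l : ℝ) - 1) ^ (l - 1) / ((k : ℝ) + l - 1) ^ (k + l - 1)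

/-- The edge density `ρ(Z)` of a set of vertices `Z`: the number of unordered adjacent
pairs in `Z` divided by `C(|Z|,2)`. -/
noncomputable def densSet {V : Type*} [Fintype V] (A : V → V → Prop) (Z : Set V) : ℝ :=
  ((Nat.card {p : V × V // p.1 ∈ Z ∧ p.2 ∈ Z ∧ (A p.1 p.2 ∨ A p.2 p.1)} : ℝ) / 2) /
    (Nat.choose (Nat.card Z) 2 : ℝ)

/-- `d = 1 − (E_{x ∈ X} ρ⁻_Y(x))/(1−α)`. -/
noncomputable def dXY {V : Type*} [Fintype V] (A : V → V → Prop) : ℝ :=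
  1 - ((∑ᶠ x ∈ bigX A, rhoMIn A (bigY A) x) / (Nat.card (bigX A) : ℝ)) / (1 - alphaX A)

/-- `OPT(k,l)`. -/
noncomputable def OPT (k l : ℕ) : ℝ :=
  if k = l then
    (1 / 2 ^ (2 * k)) *
      sSup {y : ℝ | ∃ a ∈ Set.Icc (0 : ℝ) 1, y = a * (1 - a) ^ (2 * k) + (1 - a) * a ^ (2 * k)}
  else
    sSup {y : ℝ | ∃ a ∈ Set.Icc (0 : ℝ) (1 / 2),
      ∃ d ∈ Set.Icc (0 : ℝ) ((k : ℝ) / ((k : ℝ) + (l : ℝ))),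
      y = a * (1 - a) ^ (k + l) * d ^ k * (1 - d) ^ l
        + (((k : ℝ) - 1) ^ (k - 1) * (l : ℝ) ^ l / ((k : ℝ) + (l : ℝ) - 1) ^ (k + l - 1))
          * (1 - a) * a ^ (k + l) * (1 - d)}

/-!
Let `x ∈ X` and `m = k + l`. In an induced copy of the star the leaves are pairwise non-adjacent,
so if some vertex `w ∈ X` is a leaf, the other `m - 1` leaves lie in the set of non-neighbours of
`w`, which has measure at most `1 / 2`. By AM-GM such copies are rare: they account for little of
`(m + 1) s(x)`, which the hypothesis bounds below by `(m + 1) OPT(k,l) ≥ λ₀ (m / (m + 1)) ^ m`.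
Hence most of it comes from the copies centred at `x` with all leaves in `Y`, whose density is at
most `p ^ k * q ^ l` for `p = ρ⁺_Y(x)` and `q = ρ⁻_Y(x)`. If `q ≤ α / 2`, AM-GM for `p` and
`(1 + s) q`, with `s` chosen according to the size of `α`, makes this smaller than required.
-/

/-- `(n / (n + 1)) ^ n`, the reciprocal of Euler's `(1 + 1 / n) ^ n`, with value `1` at `n = 0`.
It is the factor by which `n ^ n / (n + 1) ^ (n + 1)` differs from `1 / (n + 1)`. -/
noncomputable def eulerRatio (n : ℕ) : ℝ := ((n : ℝ) / (n + 1)) ^ n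

/-- The AM-GM weight, in units of `lam0 k l` with `m = k + l` and up to a factor
`eulerRatio (k - 1)` or `eulerRatio (l - 1)`, of the copies of `S_{k,l}` in which one prescribed
vertex is a leaf and the `m - 1` other leaves range over a set of measure `δ`. -/
noncomputable def leafWeight (m : ℕ) (δ : ℝ) : ℝ := m / eulerRatio (m - 1) * δ ^ (m - 1)

section EulerRatio

lemma eulerRatio_pos (n : ℕ) : 0 < eulerRatio n := by
  rcases n.eq_zero_or_pos with rfl | hn
  · simp [eulerRatio]
  · unfold eulerRatio
    positivity

lemma eulerRatio_le_one (n : ℕ) : eulerRatio n ≤ 1 :=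
  pow_le_one₀ (by positivity) ((div_le_one (by positivity)).2 (by linarith))

lemma eulerRatio_eq_inv {n : ℕ} (hn : 1 ≤ n) : eulerRatio n = ((1 + 1 / (n : ℝ)) ^ n)⁻¹ := by
  have : (0 : ℝ) < n := by exact_mod_cast hn
  rw [eulerRatio, ← inv_pow]
  congr 1
  field_simp

lemma eulerRatio_le_half {n : ℕ} (hn : 1 ≤ n) : eulerRatio n ≤ 1 / 2 := by
  have hn' : (0 : ℝ) < n := by exact_mod_cast hn
  have bernoulli := one_add_mul_le_pow (a := 1 / (n : ℝ)) (by linarith [one_div_pos.2 hn']) n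
  rw [mul_one_div_cancel hn'.ne'] at bernoulli
  rw [eulerRatio_eq_inv hn, ← one_div]
  exact one_div_le_one_div_of_le two_pos (by linarith)

lemma lt_eulerRatio (n : ℕ) : 0.3678 < eulerRatio n := by
  rcases n.eq_zero_or_pos with rfl | hn
  · norm_num [eulerRatio]
  have hn' : (0 : ℝ) < n := by exact_mod_cast hn
  have hexp : (1 + 1 / (n : ℝ)) ^ n ≤ Real.exp 1 := by
    calc (1 + 1 / (n : ℝ)) ^ n ≤ Real.exp (1 / n) ^ n := by
          gcongr
          linarith [Real.add_one_le_exp (1 / (n : ℝ))]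
      _ = Real.exp 1 := by rw [← Real.exp_nat_mul, mul_one_div_cancel hn'.ne']
  rw [eulerRatio_eq_inv hn, lt_inv_comm₀ (by norm_num) (by positivity)]
  exact (hexp.trans_lt Real.exp_one_lt_d9).trans (by norm_num)

lemma leafWeight_nonneg (m : ℕ) {δ : ℝ} (hδ : 0 ≤ δ) : 0 ≤ leafWeight m δ :=
  mul_nonneg (div_nonneg m.cast_nonneg (eulerRatio_pos _).le) (pow_nonneg hδ _)

lemma leafWeight_half_mul_pow (m : ℕ) (x : ℝ) :
    leafWeight m (1 / 2) * (2 * x) ^ (m - 1) = leafWeight m x := by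
  rw [leafWeight, leafWeight, mul_assoc, ← mul_pow]
  ring_nf

end EulerRatio

section Lam0

lemma lam0_comm (s t : ℕ) : lam0 s t = lam0 t s := by
  rw [lam0, lam0, mul_comm, add_comm (s : ℝ), add_comm s]

lemma lam0_pos (s t : ℕ) : 0 < lam0 s t := by
  have hpow (n : ℕ) : (0 : ℝ) < (n : ℝ) ^ n := by exact_mod_cast n.pow_self_pos
  have hst := hpow (s + t)
  push_cast at hst
  exact div_pos (mul_pos (hpow s) (hpow t)) hst

lemma div_pow_mul_div_pow_le {s t : ℕ} (hst : 0 < s + t) {a b : ℝ} (ha : 0 ≤ a) (hb : 0 ≤ b) :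
    (a / s) ^ s * (b / t) ^ t ≤ ((a + b) / (s + t)) ^ (s + t) := by
  have hst' : (0 : ℝ) < s + t := by exact_mod_cast hst
  have amgm := Real.geom_mean_le_arith_mean2_weighted (w₁ := (s : ℝ) / (s + t))
    (w₂ := (t : ℝ) / (s + t)) (p₁ := a / s) (p₂ := b / t) (by positivity) (by positivity)
    (by positivity) (by positivity) (by field_simp)
  have hmean : (s : ℝ) / (s + t) * (a / s) + (t : ℝ) / (s + t) * (b / t) ≤ (a + b) / (s + t) := by
    have hweight {x : ℝ} (hx : 0 ≤ x) (n : ℕ) :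
        (n : ℝ) / (s + t) * (x / n) ≤ x / (s + t) := by
      rw [div_mul_div_comm, mul_comm ((s : ℝ) + t), mul_div_mul_comm]
      exact mul_le_of_le_one_left (by positivity) (div_self_le_one _)
    rw [add_div]
    exact add_le_add (hweight ha s) (hweight hb t)
  have hpow {x : ℝ} (hx : 0 ≤ x) (n : ℕ) : (x ^ ((n : ℝ) / (s + t))) ^ (s + t) = x ^ n := by
    rw [← Real.rpow_natCast, ← Real.rpow_mul hx, Nat.cast_add, div_mul_cancel₀ _ hst'.ne',
      Real.rpow_natCast]
  calc (a / s) ^ s * (b / t) ^ t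
      = ((a / s) ^ ((s : ℝ) / (s + t)) * (b / t) ^ ((t : ℝ) / (s + t))) ^ (s + t) := by
        rw [mul_pow, hpow (by positivity), hpow (by positivity)]
    _ ≤ ((a + b) / (s + t)) ^ (s + t) := by
        gcongr
        exact amgm.trans hmean

lemma pow_mul_pow_le_lam0_mul (s t : ℕ) {a b c : ℝ} (ha : 0 ≤ a) (hb : 0 ≤ b) (hab : a + b ≤ c) :
    a ^ s * b ^ t ≤ lam0 s t * c ^ (s + t) := by
  rcases (s + t).eq_zero_or_pos with h0 | hst
  · obtain ⟨rfl, rfl⟩ : s = 0 ∧ t = 0 := by omega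
    simp [lam0]
  have hcancel (x : ℝ) (n : ℕ) : (n : ℝ) ^ n * (x / n) ^ n = x ^ n := by
    rcases n.eq_zero_or_pos with rfl | hn
    · simp
    · rw [← mul_pow, mul_div_cancel₀ _ (by positivity)]
  calc a ^ s * b ^ t
      = (s : ℝ) ^ s * (t : ℝ) ^ t * ((a / s) ^ s * (b / t) ^ t) := by
        rw [← hcancel a s, ← hcancel b t]
        ring
    _ ≤ (s : ℝ) ^ s * (t : ℝ) ^ t * ((a + b) / (s + t)) ^ (s + t) := by
        gcongr
        exact div_pow_mul_div_pow_le hst ha hb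
    _ = lam0 s t * (a + b) ^ (s + t) := by
        rw [lam0, div_pow]
        ring
    _ ≤ lam0 s t * c ^ (s + t) := by
        gcongr
        exact (lam0_pos s t).le

lemma natCast_mul_lam0_pred_right (k : ℕ) {l : ℕ} (hl : 1 ≤ l) (δ : ℝ) :
    l * (lam0 k (l - 1) * δ ^ (k + l - 1)) =
      lam0 k l * (leafWeight (k + l) δ * eulerRatio (l - 1)) := by
  obtain ⟨l, rfl⟩ := Nat.exists_eq_add_of_le' hl
  have hkl : ((k : ℝ) + l) ^ (k + l) ≠ 0 := by exact_mod_cast (k + l).pow_self_pos.ne'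
  simp only [lam0, leafWeight, eulerRatio, Nat.add_sub_cancel, ← add_assoc, Nat.cast_add,
    Nat.cast_one, div_pow]
  field_simp
  ring

lemma natCast_mul_lam0_pred_left {k : ℕ} (hk : 1 ≤ k) (l : ℕ) (δ : ℝ) :
    k * (lam0 (k - 1) l * δ ^ (k + l - 1)) =
      lam0 k l * (leafWeight (k + l) δ * eulerRatio (k - 1)) := by
  simpa only [lam0_comm, add_comm l k] using natCast_mul_lam0_pred_right l hk δ

end Lam0

section OPT

lemma lam0_eq_pow_mul_one_sub_pow {k l : ℕ} (hkl : 0 < k + l) :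
    lam0 k l = ((k : ℝ) / (k + l)) ^ k * (1 - (k : ℝ) / (k + l)) ^ l := by
  have hkl' : (0 : ℝ) < k + l := by exact_mod_cast hkl
  rw [one_sub_div hkl'.ne', add_sub_cancel_left, div_pow, div_pow, div_mul_div_comm, ← pow_add,
    lam0]

lemma eulerRatio_div_eq (n : ℕ) :
    eulerRatio n / (n + 1) = 1 / ((n : ℝ) + 1) * (1 - 1 / ((n : ℝ) + 1)) ^ n := by
  rw [one_sub_div (by positivity), add_sub_cancel_right, eulerRatio, div_mul_eq_mul_div, one_mul]

lemma lam0_mul_eulerRatio_div_le_OPT_self {k : ℕ} (hk : 1 ≤ k) :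
    lam0 k k * (eulerRatio (2 * k) / ((2 * k : ℕ) + 1)) ≤ OPT k k := by
  have : (0 : ℝ) < k := by exact_mod_cast hk
  have hlam : lam0 k k = 1 / 2 ^ (2 * k) := by
    rw [lam0_eq_pow_mul_one_sub_pow (by omega), show (k : ℝ) / (k + k) = 1 / 2 by field_simp; ring,
      sub_half, ← pow_add, ← two_mul, one_div_pow]
  set a : ℝ := 1 / ((2 * k : ℕ) + 1)
  have ha01 : a ∈ Set.Icc (0 : ℝ) 1 :=
    ⟨by positivity, (div_le_one (by positivity)).2 (by linarith [(2 * k).cast_nonneg (α := ℝ)])⟩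
  have hbdd : BddAbove {y : ℝ | ∃ a ∈ Set.Icc (0 : ℝ) 1,
      y = a * (1 - a) ^ (2 * k) + (1 - a) * a ^ (2 * k)} := by
    refine ((isCompact_Icc (a := (0 : ℝ)) (b := 1)).bddAbove_image (f := fun a =>
      a * (1 - a) ^ (2 * k) + (1 - a) * a ^ (2 * k)) (by fun_prop)).mono ?_
    rintro _ ⟨a, ha, rfl⟩
    exact ⟨a, ha, rfl⟩
  rw [hlam, eulerRatio_div_eq, OPT, if_pos rfl]
  gcongr
  exact (le_add_of_nonneg_right (mul_nonneg (sub_nonneg.2 ha01.2) (pow_nonneg ha01.1 _))).trans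
    (le_csSup hbdd ⟨a, ha01, rfl⟩)

lemma lam0_mul_eulerRatio_div_le_OPT_of_ne {k l : ℕ} (hk : 1 ≤ k) (hkl : k ≠ l) :
    lam0 k l * (eulerRatio (k + l) / ((k + l : ℕ) + 1)) ≤ OPT k l := by
  have hk' : (1 : ℝ) ≤ k := by exact_mod_cast hk
  rw [lam0_eq_pow_mul_one_sub_pow (by omega), eulerRatio_div_eq, OPT, if_neg hkl]
  -- `a` and `d` maximise the first summand of the objective; the second one is nonnegative.
  set c : ℝ := ((k : ℝ) - 1) ^ (k - 1) * (l : ℝ) ^ l / ((k : ℝ) + (l : ℝ) - 1) ^ (k + l - 1)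
  set a : ℝ := 1 / ((k + l : ℕ) + 1)
  set d : ℝ := (k : ℝ) / ((k : ℝ) + (l : ℝ))
  have hc : 0 ≤ c := by
    have : 0 ≤ (k : ℝ) - 1 := by linarith
    have : 0 ≤ (k : ℝ) + l - 1 := by linarith [l.cast_nonneg (α := ℝ)]
    positivity
  have hd01 : d ≤ 1 := (div_le_one (by positivity)).2 (by linarith [l.cast_nonneg (α := ℝ)])
  have ha_mem : a ∈ Set.Icc (0 : ℝ) (1 / 2) := by
    refine ⟨by positivity, one_div_le_one_div_of_le two_pos ?_⟩
    push_cast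
    linarith [l.cast_nonneg (α := ℝ)]
  have hd_mem : d ∈ Set.Icc (0 : ℝ) d := ⟨by positivity, le_rfl⟩
  have hbdd : BddAbove {y : ℝ | ∃ a ∈ Set.Icc (0 : ℝ) (1 / 2), ∃ b ∈ Set.Icc (0 : ℝ) d,
      y = a * (1 - a) ^ (k + l) * b ^ k * (1 - b) ^ l
        + c * (1 - a) * a ^ (k + l) * (1 - b)} := by
    refine (((isCompact_Icc (a := (0 : ℝ)) (b := 1 / 2)).prod
      (isCompact_Icc (a := 0) (b := d))).bddAbove_image (f := fun p =>
      p.1 * (1 - p.1) ^ (k + l) * p.2 ^ k * (1 - p.2) ^ l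
        + c * (1 - p.1) * p.1 ^ (k + l) * (1 - p.2)) (by fun_prop)).mono ?_
    rintro _ ⟨a, ha, b, hb, rfl⟩
    exact ⟨(a, b), ⟨ha, hb⟩, rfl⟩
  have hrest : 0 ≤ c * (1 - a) * a ^ (k + l) * (1 - d) :=
    mul_nonneg (mul_nonneg (mul_nonneg hc (by linarith [ha_mem.2])) (pow_nonneg ha_mem.1 _))
      (sub_nonneg.2 hd01)
  linarith [le_csSup hbdd ⟨a, ha_mem, d, hd_mem, rfl⟩]

lemma lam0_mul_eulerRatio_div_le_OPT {k : ℕ} (hk : 1 ≤ k) (l : ℕ) :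
    lam0 k l * (eulerRatio (k + l) / ((k + l : ℕ) + 1)) ≤ OPT k l := by
  rcases eq_or_ne k l with rfl | hkl
  · simpa only [two_mul] using lam0_mul_eulerRatio_div_le_OPT_self hk
  · exact lam0_mul_eulerRatio_div_le_OPT_of_ne hk hkl

end OPT

section Density

variable {V : Type*} [Fintype V]

lemma muSet_nonneg (S : Set V) : 0 ≤ muSet S := by
  unfold muSet
  positivity

lemma muSet_mono {S T : Set V} (h : S ⊆ T) : muSet S ≤ muSet T := by
  unfold muSet
  gcongr
  exact Nat.card_mono T.toFinite h

lemma muSet_union {S T : Set V} (h : Disjoint S T) : muSet (S ∪ T) = muSet S + muSet T := by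
  rw [muSet, muSet, muSet, ← add_div, ← Nat.cast_add]
  congr 2
  exact Set.ncard_union_eq h

lemma muSet_compl [Nonempty V] (S : Set V) : muSet Sᶜ = 1 - muSet S := by
  rw [eq_sub_iff_add_eq', ← muSet_union disjoint_compl_right, Set.union_compl_self, muSet,
    Nat.card_univ, Nat.card_eq_fintype_card,
    div_self (Nat.cast_ne_zero.2 Fintype.card_pos.ne')]

lemma sum_le_muSet_mul {f : V → ℝ} {N : Set V} {c : ℝ} (hN : ∀ w ∈ N, f w ≤ c / Fintype.card V)
    (h0 : ∀ w ∉ N, f w = 0) : ∑ w, f w ≤ muSet N * c := by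
  classical
  calc ∑ w, f w = ∑ w with w ∈ N, f w :=
        (Finset.sum_filter_of_ne fun w _ hw => not_imp_comm.1 (h0 w) hw).symm
    _ = ∑ w ∈ N.toFinset, f w := by rw [Set.filter_mem_univ_eq_toFinset]
    _ ≤ N.toFinset.card • (c / Fintype.card V) :=
        Finset.sum_le_card_nsmul _ _ _ fun w hw => hN w (Set.mem_toFinset.1 hw)
    _ = muSet N * c := by
        rw [nsmul_eq_mul, muSet, Nat.card_eq_card_toFinset]
        ring

variable {A : V → V → Prop}

lemma rhoPIn_eq_muSet (B : Set V) (v : V) : rhoPIn A B v = muSet {u | A v u ∧ u ∈ B} := rfl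

lemma rhoMIn_eq_muSet (B : Set V) (v : V) : rhoMIn A B v = muSet {u | A u v ∧ u ∈ B} := rfl

lemma rho_eq_muSet (v : V) : rho A v = muSet {u | A v u ∨ A u v} := rfl

lemma rhoPIn_nonneg (B : Set V) (v : V) : 0 ≤ rhoPIn A B v := muSet_nonneg _

lemma rhoMIn_nonneg (B : Set V) (v : V) : 0 ≤ rhoMIn A B v := muSet_nonneg _

lemma rhoPIn_add_rhoPIn_compl (B : Set V) (v : V) :
    rhoPIn A B v + rhoPIn A Bᶜ v = rhoPIn A Set.univ v := by
  rw [rhoPIn_eq_muSet, rhoPIn_eq_muSet, rhoPIn_eq_muSet,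
    ← muSet_union (Set.disjoint_left.2 fun w hw hw' => hw'.2 hw.2)]
  congr 1
  ext w
  simp only [Set.mem_union, Set.mem_ofPred_eq, Set.mem_compl_iff, Set.mem_univ, ← and_or_left, em]

lemma rhoMIn_add_rhoMIn_compl (B : Set V) (v : V) :
    rhoMIn A B v + rhoMIn A Bᶜ v = rhoMIn A Set.univ v :=
  rhoPIn_add_rhoPIn_compl (A := fun a b => A b a) B v

lemma rhoPIn_add_rhoMIn (hopp : ∀ u v, A u v → ¬ A v u) (B : Set V) (v : V) :
    rhoPIn A B v + rhoMIn A B v = muSet ({u | A v u ∨ A u v} ∩ B) := by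
  rw [rhoPIn_eq_muSet, rhoMIn_eq_muSet,
    ← muSet_union (Set.disjoint_left.2 fun w hw hw' => hopp _ _ hw.1 hw'.1)]
  congr 1
  ext w
  simp only [Set.mem_union, Set.mem_inter_iff, Set.mem_ofPred_eq, or_and_right]

lemma rhoPIn_add_rhoMIn_le (hopp : ∀ u v, A u v → ¬ A v u) (B : Set V) (v : V) :
    rhoPIn A B v + rhoMIn A B v ≤ muSet B :=
  (rhoPIn_add_rhoMIn hopp B v).trans_le (muSet_mono Set.inter_subset_right)

lemma rhoPIn_univ_add_rhoMIn_univ (hopp : ∀ u v, A u v → ¬ A v u) (v : V) :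
    rhoPIn A Set.univ v + rhoMIn A Set.univ v = rho A v := by
  rw [rhoPIn_add_rhoMIn hopp, Set.inter_univ, rho_eq_muSet]

lemma muSet_nonadjacent (v : V) : muSet {u | A v u ∨ A u v}ᶜ = 1 - rho A v :=
  have : Nonempty V := ⟨v⟩
  muSet_compl _

lemma one_sub_rho_nonneg (v : V) : 0 ≤ 1 - rho A v :=
  (muSet_nonneg _).trans_eq (muSet_nonadjacent v)

end Density

section Leaves

variable {k l : ℕ} {i j : Fin (k + l + 1)}

/-- The out-leaves `1, …, k` of `S_{k,l}`. -/
def outLeaves (k l : ℕ) : Finset (Fin (k + l + 1)) := Finset.Ioc 0 ⟨k, by omega⟩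

/-- The in-leaves `k + 1, …, k + l` of `S_{k,l}`. -/
def inLeaves (k l : ℕ) : Finset (Fin (k + l + 1)) := Finset.Ioi ⟨k, by omega⟩

@[simp]
lemma card_outLeaves : (outLeaves k l).card = k := by simp [outLeaves]

@[simp]
lemma card_inLeaves : (inLeaves k l).card = l := by simp [inLeaves]

lemma mem_outLeaves_iff_starArc : i ∈ outLeaves k l ↔ StarArc k l 0 i := by
  rw [outLeaves, Finset.mem_Ioc, Fin.lt_def, Fin.le_def, StarArc]
  simp only [Fin.val_zero, true_and]
  omega

lemma mem_inLeaves_iff_starArc : i ∈ inLeaves k l ↔ StarArc k l i 0 := by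
  rw [inLeaves, Finset.mem_Ioi, Fin.lt_def, StarArc]
  simp only [Fin.val_zero, true_and]
  omega

lemma one_mem_outLeaves (hk : 1 ≤ k) : 1 ∈ outLeaves k l := by
  rw [mem_outLeaves_iff_starArc]
  simp only [StarArc, Fin.val_zero, Fin.val_one', true_and]
  rw [Nat.mod_eq_of_lt (by omega)]
  omega

lemma ofNat_mem_inLeaves (hl : 1 ≤ l) : Fin.ofNat (k + l + 1) (k + 1) ∈ inLeaves k l := by
  rw [mem_inLeaves_iff_starArc]
  simp only [StarArc, Fin.val_zero, Fin.val_ofNat, true_and]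
  rw [Nat.mod_eq_of_lt (by omega)]
  omega

lemma disjoint_outLeaves_inLeaves : Disjoint (outLeaves k l) (inLeaves k l) :=
  Finset.disjoint_left.2 fun _ hi hi' =>
    (Finset.mem_Ioc.1 hi).2.not_gt (Finset.mem_Ioi.1 hi')

lemma mem_outLeaves_union_inLeaves : i ∈ outLeaves k l ∪ inLeaves k l ↔ i ≠ 0 := by
  simp only [Finset.mem_union, outLeaves, inLeaves, Finset.mem_Ioc, Finset.mem_Ioi, Fin.lt_def,
    Fin.le_def, ne_eq, Fin.ext_iff, Fin.val_zero]
  omega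

lemma mem_erase_outLeaves_union_erase_inLeaves :
    i ∈ (outLeaves k l).erase j ∪ (inLeaves k l).erase j ↔ i ≠ j ∧ i ≠ 0 := by
  rw [← Finset.erase_union_distrib, Finset.mem_erase, mem_outLeaves_union_inLeaves]

lemma card_erase_outLeaves_add_card_erase_inLeaves (hj : j ≠ 0) :
    ((outLeaves k l).erase j).card + ((inLeaves k l).erase j).card + 1 = k + l := by
  have hdisj : Disjoint ((outLeaves k l).erase j) ((inLeaves k l).erase j) :=
    disjoint_outLeaves_inLeaves.mono (Finset.erase_subset _ _) (Finset.erase_subset _ _)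
  rw [← Finset.card_union_of_disjoint hdisj, ← Finset.erase_union_distrib,
    Finset.card_erase_add_one (mem_outLeaves_union_inLeaves.2 hj),
    Finset.card_union_of_disjoint disjoint_outLeaves_inLeaves, card_outLeaves, card_inLeaves]

lemma not_starArc_of_ne_zero (hi : i ≠ 0) (hj : j ≠ 0) : ¬ StarArc k l i j := by
  rintro (⟨h, -⟩ | ⟨h, -⟩)
  · exact hi (Fin.ext h)
  · exact hj (Fin.ext h)

end Leaves

section Counting

variable {ι V : Type*}

lemma natCard_le_prod_of_forall_mem [Finite V] {P : (ι → V) → Prop} (R : Finset ι)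
    (S : ι → Set V) (c : ι → V) (hmem : ∀ φ, P φ → ∀ i ∈ R, φ i ∈ S i)
    (hfix : ∀ φ, P φ → ∀ i ∉ R, φ i = c i) :
    Nat.card {φ // P φ} ≤ ∏ i ∈ R, Nat.card (S i) := by
  calc Nat.card {φ // P φ} ≤ Nat.card (∀ i : R, S i) := by
        refine Nat.card_le_card_of_injective (fun φ i => ⟨φ.1 i, hmem φ.1 φ.2 i i.2⟩) ?_
        intro φ ψ h
        ext i
        by_cases hi : i ∈ R
        · exact congrArg Subtype.val (congrFun h ⟨i, hi⟩)
        · rw [hfix φ.1 φ.2 i hi, hfix ψ.1 ψ.2 i hi]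
    _ = ∏ i ∈ R, Nat.card (S i) := by
        rw [Nat.card_pi, Finset.prod_coe_sort R fun i => Nat.card (S i)]

lemma natCard_le_add_sum [Finite V] {P Q : V → Prop} {s : Finset ι} {R : ι → V → Prop}
    (h : ∀ x, P x → Q x ∨ ∃ i ∈ s, R i x) :
    Nat.card {x // P x} ≤ Nat.card {x // Q x} + ∑ i ∈ s, Nat.card {x // R i x} := by
  classical
  have := Fintype.ofFinite V
  simp only [Nat.card_eq_fintype_card, Fintype.card_subtype]
  calc (Finset.univ.filter P).card
      ≤ (Finset.univ.filter Q ∪ s.biUnion fun i => Finset.univ.filter (R i)).card := by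
        refine Finset.card_le_card fun x hx => ?_
        simpa using h x (Finset.mem_filter.1 hx).2
    _ ≤ _ := (Finset.card_union_le _ _).trans (Nat.add_le_add_left Finset.card_biUnion_le _)

lemma natCard_eq_sum_natCard_fiber [Finite ι] [Fintype V] (P : ι → Prop) (f : ι → V) :
    Nat.card {x // P x} = ∑ v, Nat.card {x // P x ∧ f x = v} := by
  rw [← Nat.card_sigma]
  exact Nat.card_congr
    { toFun x := ⟨f x, x, x.2, rfl⟩
      invFun x := ⟨x.2, x.2.2.1⟩
      left_inv _ := rfl
      right_inv := by rintro ⟨_, x, _, rfl⟩; rfl }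

end Counting

section StarDensity

variable {V : Type*} {A : V → V → Prop} {k l : ℕ}

lemma IsStarEmb.adj_of_mem_outLeaves {φ : Fin (k + l + 1) → V} (hφ : IsStarEmb k l A φ)
    {i : Fin (k + l + 1)} (hi : i ∈ outLeaves k l) : A (φ 0) (φ i) :=
  (hφ.2 0 i).1 (mem_outLeaves_iff_starArc.1 hi)

lemma IsStarEmb.adj_of_mem_inLeaves {φ : Fin (k + l + 1) → V} (hφ : IsStarEmb k l A φ)
    {i : Fin (k + l + 1)} (hi : i ∈ inLeaves k l) : A (φ i) (φ 0) :=
  (hφ.2 i 0).1 (mem_inLeaves_iff_starArc.1 hi)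

variable [Fintype V]

lemma sCond_zero_eq_sCondOn_true (v : V) : sCond k l A 0 v = sCondOn k l A v fun _ => True := by
  simp only [sCond, sCondOn, and_true]

lemma sCondOn_eq_zero {v : V} {P : (Fin (k + l + 1) → V) → Prop}
    (h : ∀ φ, IsStarEmb k l A φ → φ 0 = v → ¬ P φ) : sCondOn k l A v P = 0 := by
  have : IsEmpty {φ : Fin (k + l + 1) → V // IsStarEmb k l A φ ∧ φ 0 = v ∧ P φ} :=
    ⟨fun φ => h φ.1 φ.2.1 φ.2.2.1 φ.2.2.2⟩
  rw [sCondOn, Nat.card_of_isEmpty, Nat.cast_zero, zero_div]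

lemma sCondOn_le_sCondOn_add_sum {v : V} {ι : Type*} {s : Finset ι}
    {P Q : (Fin (k + l + 1) → V) → Prop} {R : ι → (Fin (k + l + 1) → V) → Prop}
    (h : ∀ φ, P φ → Q φ ∨ ∃ i ∈ s, R i φ) :
    sCondOn k l A v P ≤ sCondOn k l A v Q + ∑ i ∈ s, sCondOn k l A v (R i) := by
  simp only [sCondOn]
  rw [← Finset.sum_div, ← add_div]
  gcongr
  norm_cast
  exact natCard_le_add_sum fun φ ⟨hφ, h0, hP⟩ =>
    (h φ hP).imp (fun hQ => ⟨hφ, h0, hQ⟩) fun ⟨i, hi, hR⟩ => ⟨i, hi, hφ, h0, hR⟩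

lemma sCondOn_mono {v : V} {P Q : (Fin (k + l + 1) → V) → Prop} (h : ∀ φ, P φ → Q φ) :
    sCondOn k l A v P ≤ sCondOn k l A v Q := by
  simpa using sCondOn_le_sCondOn_add_sum (s := ∅) (R := fun (_ : Unit) _ => False)
    fun φ hP => Or.inl (h φ hP)

lemma sCondOn_eq_sum_fiber (v : V) (P : (Fin (k + l + 1) → V) → Prop) (j : Fin (k + l + 1)) :
    sCondOn k l A v P = ∑ w, sCondOn k l A v fun φ => P φ ∧ φ j = w := by
  simp only [sCondOn]
  rw [← Finset.sum_div, natCard_eq_sum_natCard_fiber _ (fun φ : Fin (k + l + 1) → V => φ j)]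
  push_cast
  simp only [and_assoc]

lemma sCond_eq_sum_center (j : Fin (k + l + 1)) (v : V) :
    sCond k l A j v = ∑ u, sCondOn k l A u fun φ => φ j = v := by
  simp only [sCond, sCondOn]
  rw [← Finset.sum_div, natCard_eq_sum_natCard_fiber _ (fun φ : Fin (k + l + 1) → V => φ 0)]
  push_cast
  simp only [and_assoc, and_comm (a := _ = v)]

lemma sCondOn_le_of_forall_mem {u : V} {B : Set V} {O I : Finset (Fin (k + l + 1))}
    {P : (Fin (k + l + 1) → V) → Prop} {r : ℕ} (hO : O ⊆ outLeaves k l) (hI : I ⊆ inLeaves k l)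
    (hr : O.card + I.card + r = k + l) (c : Fin (k + l + 1) → V)
    (hfix : ∀ φ, φ 0 = u → P φ → ∀ i ∉ O ∪ I, φ i = c i)
    (hB : ∀ φ, IsStarEmb k l A φ → P φ → ∀ i ∈ O ∪ I, φ i ∈ B) :
    sCondOn k l A u P ≤
      rhoPIn A B u ^ O.card * rhoMIn A B u ^ I.card / (Fintype.card V : ℝ) ^ r := by
  classical
  let S (i : Fin (k + l + 1)) : Set V :=
    if i ∈ O then {w | A u w ∧ w ∈ B} else {w | A w u ∧ w ∈ B}
  have hdisj : Disjoint O I := disjoint_outLeaves_inLeaves.mono hO hI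
  have hcount : Nat.card {φ : Fin (k + l + 1) → V // IsStarEmb k l A φ ∧ φ 0 = u ∧ P φ} ≤
      ∏ i ∈ O ∪ I, Nat.card (S i) := by
    refine natCard_le_prod_of_forall_mem (O ∪ I) S c ?_ fun φ hφ => hfix φ hφ.2.1 hφ.2.2
    rintro φ ⟨hφ, rfl, hP⟩ i hi
    by_cases hiO : i ∈ O
    · simpa only [S, if_pos hiO] using ⟨hφ.adj_of_mem_outLeaves (hO hiO), hB φ hφ hP i hi⟩
    · have hiI : i ∈ I := (Finset.mem_union.1 hi).resolve_left hiO
      simpa only [S, if_neg hiO] using ⟨hφ.adj_of_mem_inLeaves (hI hiI), hB φ hφ hP i hi⟩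
  have hprod : ∏ i ∈ O ∪ I, Nat.card (S i) =
      Nat.card {w // A u w ∧ w ∈ B} ^ O.card * Nat.card {w // A w u ∧ w ∈ B} ^ I.card := by
    rw [Finset.prod_union hdisj]
    congr 1 <;> refine Finset.prod_eq_pow_card fun i hi => ?_
    · simp only [S, if_pos hi]
      rfl
    · simp only [S, if_neg (Finset.disjoint_right.1 hdisj hi)]
      rfl
  calc sCondOn k l A u P
      ≤ (Nat.card {w // A u w ∧ w ∈ B} ^ O.card * Nat.card {w // A w u ∧ w ∈ B} ^ I.card : ℕ) /
          (Fintype.card V : ℝ) ^ (k + l) := by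
        unfold sCondOn
        gcongr
        exact hcount.trans_eq hprod
    _ = rhoPIn A B u ^ O.card * rhoMIn A B u ^ I.card / (Fintype.card V : ℝ) ^ r := by
        rw [rhoPIn, rhoMIn, div_pow, div_pow, div_mul_div_comm, div_div, ← pow_add, ← pow_add, hr]
        push_cast
        rfl

lemma sCondOn_leaves_mem_le (u : V) (B : Set V) :
    sCondOn k l A u (fun φ => ∀ i ≠ 0, φ i ∈ B) ≤ rhoPIn A B u ^ k * rhoMIn A B u ^ l := by
  have hleaves {i : Fin (k + l + 1)} : i ∈ outLeaves k l ∪ inLeaves k l ↔ i ≠ 0 :=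
    mem_outLeaves_union_inLeaves
  simpa using sCondOn_le_of_forall_mem (r := 0) subset_rfl subset_rfl (by simp) (fun _ => u)
    (fun φ h0 _ i hi => by rwa [not_imp_comm.1 hleaves.2 hi])
    (fun φ _ hP i hi => hP i (hleaves.1 hi))

-- In an induced copy the other leaves avoid the neighbourhood of `w`, the image of the leaf `j`.
lemma sCondOn_apply_eq_le (hopp : ∀ u v, A u v → ¬ A v u) {j : Fin (k + l + 1)} (hj : j ≠ 0)
    (u w : V) :
    sCondOn k l A u (fun φ => φ j = w) ≤
      lam0 ((outLeaves k l).erase j).card ((inLeaves k l).erase j).card *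
        (1 - rho A w) ^ (k + l - 1) / Fintype.card V := by
  have hcard := card_erase_outLeaves_add_card_erase_inLeaves hj
  set B : Set V := {x | A w x ∨ A x w}ᶜ
  set O := (outLeaves k l).erase j
  set I := (inLeaves k l).erase j
  have hmem {i : Fin (k + l + 1)} : i ∈ O ∪ I ↔ i ≠ j ∧ i ≠ 0 :=
    mem_erase_outLeaves_union_erase_inLeaves
  have hbox : sCondOn k l A u (fun φ => φ j = w) ≤
      rhoPIn A B u ^ O.card * rhoMIn A B u ^ I.card / (Fintype.card V : ℝ) ^ 1 := by
    refine sCondOn_le_of_forall_mem (Finset.erase_subset _ _) (Finset.erase_subset _ _) hcard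
      (fun i => if i = j then w else u) ?_ ?_
    · rintro φ rfl rfl i hi
      split_ifs with hij
      · rw [hij]
      · rw [not_imp_comm.1 (fun hi0 => hmem.2 ⟨hij, hi0⟩) hi]
    · rintro φ hφ rfl i hi
      obtain ⟨-, hi0⟩ := hmem.1 hi
      rintro (h | h)
      · exact not_starArc_of_ne_zero hj hi0 ((hφ.2 j i).2 h)
      · exact not_starArc_of_ne_zero hi0 hj ((hφ.2 i j).2 h)
  have hsum : rhoPIn A B u + rhoMIn A B u ≤ 1 - rho A w :=
    (rhoPIn_add_rhoMIn_le hopp _ _).trans_eq (muSet_nonadjacent w)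
  rw [pow_one] at hbox
  rw [show k + l - 1 = O.card + I.card by omega]
  exact hbox.trans (div_le_div_of_nonneg_right
    (pow_mul_pow_le_lam0_mul _ _ (rhoPIn_nonneg _ _) (rhoMIn_nonneg _ _) hsum) (Nat.cast_nonneg _))

lemma sCondOn_apply_eq_le_of_mem_outLeaves (hopp : ∀ u v, A u v → ¬ A v u)
    {j : Fin (k + l + 1)} (hj : j ∈ outLeaves k l) (u w : V) :
    sCondOn k l A u (fun φ => φ j = w) ≤
      lam0 (k - 1) l * (1 - rho A w) ^ (k + l - 1) / Fintype.card V := by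
  have h := sCondOn_apply_eq_le hopp
    (mem_outLeaves_union_inLeaves.1 (Finset.mem_union_left _ hj)) u w
  rwa [Finset.card_erase_of_mem hj, card_outLeaves,
    Finset.erase_eq_of_notMem (Finset.disjoint_left.1 disjoint_outLeaves_inLeaves hj),
    card_inLeaves] at h

lemma sCondOn_apply_eq_le_of_mem_inLeaves (hopp : ∀ u v, A u v → ¬ A v u)
    {j : Fin (k + l + 1)} (hj : j ∈ inLeaves k l) (u w : V) :
    sCondOn k l A u (fun φ => φ j = w) ≤
      lam0 k (l - 1) * (1 - rho A w) ^ (k + l - 1) / Fintype.card V := by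
  have h := sCondOn_apply_eq_le hopp
    (mem_outLeaves_union_inLeaves.1 (Finset.mem_union_right _ hj)) u w
  rwa [Finset.card_erase_of_mem hj, card_inLeaves,
    Finset.erase_eq_of_notMem (Finset.disjoint_right.1 disjoint_outLeaves_inLeaves hj),
    card_outLeaves] at h

lemma sCond_le_of_mem_outLeaves (hopp : ∀ u v, A u v → ¬ A v u) {j : Fin (k + l + 1)}
    (hj : j ∈ outLeaves k l) (v : V) :
    sCond k l A j v ≤ rhoMIn A Set.univ v * (lam0 (k - 1) l * (1 - rho A v) ^ (k + l - 1)) := by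
  rw [sCond_eq_sum_center, rhoMIn_eq_muSet]
  refine sum_le_muSet_mul (fun u _ => sCondOn_apply_eq_le_of_mem_outLeaves hopp hj u v)
    fun u hu => sCondOn_eq_zero ?_
  rintro φ hφ rfl rfl
  exact hu ⟨hφ.adj_of_mem_outLeaves hj, trivial⟩

lemma sCond_le_of_mem_inLeaves (hopp : ∀ u v, A u v → ¬ A v u) {j : Fin (k + l + 1)}
    (hj : j ∈ inLeaves k l) (v : V) :
    sCond k l A j v ≤ rhoPIn A Set.univ v * (lam0 k (l - 1) * (1 - rho A v) ^ (k + l - 1)) := by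
  rw [sCond_eq_sum_center, rhoPIn_eq_muSet]
  refine sum_le_muSet_mul (fun u _ => sCondOn_apply_eq_le_of_mem_inLeaves hopp hj u v)
    fun u hu => sCondOn_eq_zero ?_
  rintro φ hφ rfl rfl
  exact hu ⟨hφ.adj_of_mem_inLeaves hj, trivial⟩

variable {B : Set V} {δ : ℝ}

lemma sCondOn_apply_mem_le_of_mem_outLeaves (hopp : ∀ u v, A u v → ¬ A v u)
    (hδ : ∀ w ∈ B, 1 - rho A w ≤ δ) {j : Fin (k + l + 1)} (hj : j ∈ outLeaves k l) (v : V) :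
    sCondOn k l A v (fun φ => φ j ∈ B) ≤
      rhoPIn A B v * (lam0 (k - 1) l * δ ^ (k + l - 1)) := by
  rw [sCondOn_eq_sum_fiber v _ j, rhoPIn_eq_muSet]
  refine sum_le_muSet_mul (fun w hw => ?_) fun w hw => sCondOn_eq_zero ?_
  · calc _ ≤ sCondOn k l A v fun φ => φ j = w := sCondOn_mono fun _ => And.right
      _ ≤ _ := sCondOn_apply_eq_le_of_mem_outLeaves hopp hj v w
      _ ≤ _ := by
        gcongr
        exacts [(lam0_pos _ _).le, one_sub_rho_nonneg w, hδ w hw.2]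
  · rintro φ hφ rfl ⟨hB, rfl⟩
    exact hw ⟨hφ.adj_of_mem_outLeaves hj, hB⟩

lemma sCondOn_apply_mem_le_of_mem_inLeaves (hopp : ∀ u v, A u v → ¬ A v u)
    (hδ : ∀ w ∈ B, 1 - rho A w ≤ δ) {j : Fin (k + l + 1)} (hj : j ∈ inLeaves k l) (v : V) :
    sCondOn k l A v (fun φ => φ j ∈ B) ≤
      rhoMIn A B v * (lam0 k (l - 1) * δ ^ (k + l - 1)) := by
  rw [sCondOn_eq_sum_fiber v _ j, rhoMIn_eq_muSet]
  refine sum_le_muSet_mul (fun w hw => ?_) fun w hw => sCondOn_eq_zero ?_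
  · calc _ ≤ sCondOn k l A v fun φ => φ j = w := sCondOn_mono fun _ => And.right
      _ ≤ _ := sCondOn_apply_eq_le_of_mem_inLeaves hopp hj v w
      _ ≤ _ := by
        gcongr
        exacts [(lam0_pos _ _).le, one_sub_rho_nonneg w, hδ w hw.2]
  · rintro φ hφ rfl ⟨hB, rfl⟩
    exact hw ⟨hφ.adj_of_mem_inLeaves hj, hB⟩

lemma sCond_zero_le (v : V) :
    sCond k l A 0 v ≤ rhoPIn A Set.univ v ^ k * rhoMIn A Set.univ v ^ l := by
  simpa only [sCond_zero_eq_sCondOn_true, Set.mem_univ, implies_true] using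
    sCondOn_leaves_mem_le (k := k) (l := l) (A := A) v Set.univ

lemma sCond_zero_le_add_leafWeight (hk : 1 ≤ k) (hl : 1 ≤ l) (hopp : ∀ u v, A u v → ¬ A v u)
    (hδ : ∀ w ∈ B, 1 - rho A w ≤ δ) (v : V) :
    sCond k l A 0 v ≤ rhoPIn A Bᶜ v ^ k * rhoMIn A Bᶜ v ^ l +
      lam0 k l * (leafWeight (k + l) δ *
        (eulerRatio (k - 1) * rhoPIn A B v + eulerRatio (l - 1) * rhoMIn A B v)) := by
  have hsplit : sCond k l A 0 v ≤ sCondOn k l A v (fun φ => ∀ i ≠ 0, φ i ∈ Bᶜ) +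
      ∑ j ∈ outLeaves k l ∪ inLeaves k l, sCondOn k l A v fun φ => φ j ∈ B := by
    rw [sCond_zero_eq_sCondOn_true]
    refine sCondOn_le_sCondOn_add_sum fun φ _ => or_iff_not_imp_left.2 fun h => ?_
    push Not at h
    simpa only [mem_outLeaves_union_inLeaves, Set.mem_compl_iff, not_not] using h
  have hout : ∑ j ∈ outLeaves k l, sCondOn k l A v (fun φ => φ j ∈ B) ≤
      k * (rhoPIn A B v * (lam0 (k - 1) l * δ ^ (k + l - 1))) := by
    simpa using Finset.sum_le_card_nsmul _ _ _ fun j hj =>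
      sCondOn_apply_mem_le_of_mem_outLeaves hopp hδ hj v
  have hin : ∑ j ∈ inLeaves k l, sCondOn k l A v (fun φ => φ j ∈ B) ≤
      l * (rhoMIn A B v * (lam0 k (l - 1) * δ ^ (k + l - 1))) := by
    simpa using Finset.sum_le_card_nsmul _ _ _ fun j hj =>
      sCondOn_apply_mem_le_of_mem_inLeaves hopp hδ hj v
  rw [Finset.sum_union disjoint_outLeaves_inLeaves] at hsplit
  rw [mul_left_comm, natCast_mul_lam0_pred_left hk] at hout
  rw [mul_left_comm, natCast_mul_lam0_pred_right k hl] at hin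
  linarith [sCondOn_leaves_mem_le (k := k) (l := l) (A := A) v Bᶜ]

lemma mul_sVert_le_sCond_zero_add (hk : 1 ≤ k) (hl : 1 ≤ l) (hopp : ∀ u v, A u v → ¬ A v u)
    (v : V) :
    (k + l + 1) * sVert k l A v ≤ sCond k l A 0 v +
      lam0 k l * (leafWeight (k + l) (1 - rho A v) *
        (eulerRatio (k - 1) * rhoMIn A Set.univ v + eulerRatio (l - 1) * rhoPIn A Set.univ v)) := by
  have hout := mul_le_mul_of_nonneg_left
    (sCond_le_of_mem_outLeaves hopp (one_mem_outLeaves (l := l) hk) v) k.cast_nonneg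
  have hin := mul_le_mul_of_nonneg_left
    (sCond_le_of_mem_inLeaves hopp (ofNat_mem_inLeaves (k := k) hl) v) l.cast_nonneg
  rw [mul_left_comm (k : ℝ), natCast_mul_lam0_pred_left hk] at hout
  rw [mul_left_comm (l : ℝ), natCast_mul_lam0_pred_right k hl] at hin
  rw [sVert, mul_div_cancel₀ _ (by positivity)]
  linarith

end StarDensity

section Numerics

lemma natCast_mul_half_pow_le {m : ℕ} (hm : 7 ≤ m) : (m : ℝ) * (1 / 2) ^ (m - 1) ≤ 7 / 64 := by
  induction m, hm using Nat.le_induction with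
  | base => norm_num
  | succ m hm ih =>
    have hm' : (1 : ℝ) ≤ m := by exact_mod_cast (by omega : 1 ≤ m)
    refine le_trans ?_ ih
    rw [Nat.add_sub_cancel, ← mul_pow_sub_one (by omega : m ≠ 0) (1 / 2 : ℝ), ← mul_assoc]
    push_cast
    gcongr
    linarith

lemma leafWeight_six_half_le : leafWeight 6 (1 / 2) ≤ 0.4666 := by
  norm_num [leafWeight, eulerRatio]

lemma leafWeight_half_le {m : ℕ} (hm : 7 ≤ m) : leafWeight m (1 / 2) ≤ 0.298 := by
  rw [leafWeight, div_mul_eq_mul_div, div_le_iff₀ (eulerRatio_pos _)]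
  linarith [natCast_mul_half_pow_le hm, lt_eulerRatio (m - 1)]

lemma leafWeight_half_le_of_six_le {m : ℕ} (hm : 6 ≤ m) : leafWeight m (1 / 2) ≤ 0.4666 := by
  rcases hm.eq_or_lt with rfl | hm
  · exact leafWeight_six_half_le
  · exact (leafWeight_half_le hm).trans (by norm_num)

lemma le_eulerRatio_six : 0.3965 ≤ eulerRatio 6 := by
  norm_num [eulerRatio]

lemma leafWeight_one_sub_mul_le {m : ℕ} (hm : 6 ≤ m) {r : ℝ} (hr : 1 / 2 ≤ r) (hr1 : r ≤ 1) :
    leafWeight m (1 - r) * r ≤ leafWeight m (1 / 2) * ((2 * (1 - r)) ^ 4 / 2) := by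
  have hy : 0 ≤ 2 * (1 - r) := by linarith
  calc leafWeight m (1 - r) * r
      = leafWeight m (1 / 2) * ((2 * (1 - r)) ^ (m - 1) * r) := by
        rw [← leafWeight_half_mul_pow, mul_assoc]
    _ ≤ leafWeight m (1 / 2) * ((2 * (1 - r)) ^ (4 + 1) * r) := by
        gcongr leafWeight m (1 / 2) * (?_ * r)
        · exact leafWeight_nonneg m (by norm_num)
        · exact pow_le_pow_of_le_one hy (by linarith) (by omega)
    _ = leafWeight m (1 / 2) * ((2 * (1 - r)) ^ 4 * (2 * (1 - r) * r)) := by ring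
    _ ≤ leafWeight m (1 / 2) * ((2 * (1 - r)) ^ 4 * (1 / 2)) := by
        gcongr
        · exact leafWeight_nonneg m (by norm_num)
        · nlinarith [sq_nonneg (2 * r - 1)]
    _ = leafWeight m (1 / 2) * ((2 * (1 - r)) ^ 4 / 2) := by ring

lemma pow_add_leafWeight_lt_eulerRatio {m : ℕ} (hm : 6 ≤ m) {r : ℝ} (hr : 1 / 2 ≤ r)
    (hr' : r ≤ 5 / 6) :
    r ^ m + leafWeight m (1 / 2) * ((2 * (1 - r)) ^ 4 / 2) < eulerRatio m := by
  have hbound {a b : ℝ} (ha : a ≤ r) (hb : r ≤ b) :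
      r ^ m + leafWeight m (1 / 2) * ((2 * (1 - r)) ^ 4 / 2) ≤
        b ^ 6 + 0.4666 * ((2 * (1 - a)) ^ 4 / 2) := by
    have hy : 0 ≤ 2 * (1 - r) := by linarith
    gcongr
    · exact (pow_le_pow_of_le_one (by linarith) (by linarith) hm).trans
        (pow_le_pow_left₀ (by linarith) hb 6)
    · exact leafWeight_half_le_of_six_le hm
  refine lt_of_le_of_lt ?_ (lt_eulerRatio m)
  rcases le_total r (7 / 10) with h | h
  · exact (hbound hr h).trans (by norm_num)
  · exact (hbound h hr').trans (by norm_num)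

lemma convexOn_const_mul_pow_sub_mul (n : ℕ) {a : ℝ} (ha : 0 ≤ a) (c : ℝ) :
    ConvexOn ℝ (Set.Ici 0) fun x : ℝ => a * x ^ n - c * x :=
  ((convexOn_pow n).smul ha).sub ((LinearMap.mulLeft ℝ c).concaveOn (convex_Ici 0))

lemma const_mul_pow_add_leafWeight_lt_eulerRatio {m : ℕ} (hm : 6 ≤ m) {α : ℝ} (hα : 1 / 10 ≤ α)
    (hα' : α ≤ 1 / 3) :
    2 / 5 * (1 - α / 4) ^ m + leafWeight m (1 / 2) * (α + 1 / 162) < eulerRatio m := by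
  have key {n : ℕ} {θ E : ℝ} (hθ : leafWeight m (1 / 2) ≤ θ) (hE : E ≤ eulerRatio m)
      (hn : n ≤ m) (h₁ : 2 / 5 * (11 / 12 : ℝ) ^ n + θ * (1 / 3 + 1 / 162) < E)
      (h₂ : 2 / 5 * (39 / 40 : ℝ) ^ n + θ * (1 / 10 + 1 / 162) < E) :
      2 / 5 * (1 - α / 4) ^ m + leafWeight m (1 / 2) * (α + 1 / 162) < eulerRatio m := by
    have hpow : (1 - α / 4) ^ m ≤ (1 - α / 4) ^ n :=
      pow_le_pow_of_le_one (by linarith) (by linarith) hn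
    -- In the variable `1 - α / 4` the left side is convex, so its endpoints suffice.
    have hchord := (convexOn_const_mul_pow_sub_mul n (a := 2 / 5) (by norm_num)
      (4 * θ)).le_max_of_mem_Icc (x := 11 / 12) (y := 39 / 40) (z := 1 - α / 4) (by norm_num)
      (by norm_num) ⟨by linarith, by linarith⟩
    have hweight : leafWeight m (1 / 2) * (α + 1 / 162) ≤ θ * (α + 1 / 162) := by gcongr
    rcases le_max_iff.1 hchord with h | h <;> linarith
  rcases hm.eq_or_lt with rfl | hm
  · exact key leafWeight_six_half_le le_eulerRatio_six le_rfl (by norm_num) (by norm_num)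
  · exact key (leafWeight_half_le hm) (lt_eulerRatio m).le hm (by norm_num) (by norm_num)

lemma one_third_add_leafWeight_lt_eulerRatio {m : ℕ} (hm : 6 ≤ m) :
    1 / 3 + leafWeight m (1 / 2) * (1 / 10 + 1 / 162) < eulerRatio m := by
  rcases hm.eq_or_lt with rfl | hm
  · linarith [leafWeight_six_half_le, le_eulerRatio_six]
  · linarith [leafWeight_half_le hm, lt_eulerRatio m]

lemma exists_pow_div_add_leafWeight_lt_eulerRatio {m : ℕ} (hm : 6 ≤ m) {α w : ℝ} (hα : α ≤ 1)
    (hwα : w ≤ α) (hw : w ≤ 3 / 4) :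
    ∃ s : ℝ, 0 ≤ s ∧ (1 - α + s * (α / 2)) ^ m / (1 + s) +
      leafWeight m (1 / 2) * (w + 1 / 162) < eulerRatio m := by
  have hθ := leafWeight_nonneg m (δ := 1 / 2) (by norm_num)
  have hweight {b : ℝ} (hb : w ≤ b) :
      leafWeight m (1 / 2) * (w + 1 / 162) ≤ leafWeight m (1 / 2) * (b + 1 / 162) := by gcongr
  have zero_works {a b : ℝ} (ha0 : 0 ≤ a) (ha : a ≤ α) (hb : w ≤ b) (hb0 : 0 ≤ b)
      (h : (1 - a) ^ 6 + 0.4666 * (b + 1 / 162) < 0.3678) :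
      (1 - α + 0 * (α / 2)) ^ m / (1 + 0) +
        leafWeight m (1 / 2) * (w + 1 / 162) < eulerRatio m := by
    have hpow : (1 - α) ^ m ≤ (1 - a) ^ 6 :=
      (pow_le_pow_of_le_one (by linarith) (by linarith) hm).trans
        (pow_le_pow_left₀ (by linarith) (by linarith) 6)
    have hθb := mul_le_mul_of_nonneg_right (leafWeight_half_le_of_six_le hm)
      (by linarith : 0 ≤ b + 1 / 162)
    rw [zero_mul, add_zero, add_zero, div_one]
    linarith [hweight hb, lt_eulerRatio m]
  rcases le_total α (1 / 10) with h₁ | h₁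
  · refine ⟨2, by norm_num, ?_⟩
    rw [show 1 - α + 2 * (α / 2) = 1 by ring, one_pow]
    linarith [one_third_add_leafWeight_lt_eulerRatio hm, hweight (hwα.trans h₁)]
  rcases le_total α (1 / 3) with h₂ | h₂
  · refine ⟨3 / 2, by norm_num, ?_⟩
    rw [show 1 - α + 3 / 2 * (α / 2) = 1 - α / 4 by ring,
      show (1 - α / 4) ^ m / (1 + 3 / 2) = 2 / 5 * (1 - α / 4) ^ m by ring]
    linarith [const_mul_pow_add_leafWeight_lt_eulerRatio hm h₁ h₂, hweight hwα]
  rcases le_total α (11 / 20) with h₃ | h₃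
  · exact ⟨0, le_rfl, zero_works (by linarith) h₂ (hwα.trans h₃) (by norm_num) (by norm_num)⟩
  · exact ⟨0, le_rfl, zero_works (by linarith) h₃ hw (by norm_num) (by norm_num)⟩

end Numerics

section CenterBound

variable {k l : ℕ} {p q : ℝ}

-- AM-GM for `p` and `(1 + s) q`; a larger `s` exploits that `q` is a small share of `p + q`.
lemma pow_mul_pow_le_of_le_half (k : ℕ) (hl : 1 ≤ l) (hp : 0 ≤ p) (hq : 0 ≤ q) {α s : ℝ}
    (hpq : p + q ≤ 1 - α) (hqα : q ≤ α / 2) (hs : 0 ≤ s) :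
    p ^ k * q ^ l ≤ lam0 k l * ((1 - α + s * (α / 2)) ^ (k + l) / (1 + s)) := by
  have hsum : p + (1 + s) * q ≤ 1 - α + s * (α / 2) := by
    linarith [mul_le_mul_of_nonneg_left hqα hs]
  rw [← mul_div_assoc, le_div_iff₀ (by linarith)]
  calc p ^ k * q ^ l * (1 + s) ≤ p ^ k * q ^ l * (1 + s) ^ l := by
        gcongr
        exact le_self_pow₀ (by linarith) (by omega)
    _ = p ^ k * ((1 + s) * q) ^ l := by
        rw [mul_pow]
        ring
    _ ≤ lam0 k l * (1 - α + s * (α / 2)) ^ (k + l) :=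
        pow_mul_pow_le_lam0_mul k l hp (by positivity) hsum

lemma pow_mul_self_le_of_half_le (hk : 5 ≤ k) (hp : 0 ≤ p) (hq : 1 / 2 ≤ q) (hpq : p + q ≤ 1) :
    p ^ k * q ≤ lam0 k 1 * (2 * (3 / 4) ^ 6) := by
  have amgm := pow_mul_pow_le_lam0_mul k 1 hp (by linarith : 0 ≤ q / 2)
    (by linarith : p + q / 2 ≤ 3 / 4)
  have hpow : (3 / 4 : ℝ) ^ (k + 1) ≤ (3 / 4) ^ 6 :=
    pow_le_pow_of_le_one (by norm_num) (by norm_num) (by omega)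
  linarith [mul_le_mul_of_nonneg_left hpow (lam0_pos k 1).le]

lemma eulerRatio_mul_add_mul_le_or_pow_mul_self_le (hk : 5 ≤ k) (hp : 0 ≤ p) (hpq : p + q ≤ 1)
    {a b : ℝ} (ha : 0 ≤ a) (hap : a ≤ p) (hb : 0 ≤ b) (hbq : b ≤ q) :
    eulerRatio (k - 1) * a + eulerRatio 0 * b ≤ 3 / 4 ∨
      p ^ k * q ≤ lam0 k 1 * (2 * (3 / 4) ^ 6) := by
  rcases le_total q (1 / 2) with hq | hq
  · have h₁ := mul_le_mul_of_nonneg_right (eulerRatio_le_half (n := k - 1) (by omega)) ha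
    have h₂ := mul_le_mul_of_nonneg_right (eulerRatio_le_one 0) hb
    exact Or.inl (by linarith)
  · exact Or.inr (pow_mul_self_le_of_half_le hk hp hq hpq)

lemma eulerRatio_mul_add_mul_le_or_pow_mul_pow_le (hk : 1 ≤ k) (hl : 1 ≤ l) (hm : 6 ≤ k + l)
    (hpq : p + q ≤ 1) {a b : ℝ} (ha : 0 ≤ a) (hap : a ≤ p) (hb : 0 ≤ b) (hbq : b ≤ q) :
    eulerRatio (k - 1) * a + eulerRatio (l - 1) * b ≤ 3 / 4 ∨
      p ^ k * q ^ l ≤ lam0 k l * (2 * (3 / 4) ^ 6) := by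
  rcases hl.eq_or_lt with rfl | hl
  · simpa only [pow_one] using eulerRatio_mul_add_mul_le_or_pow_mul_self_le (by omega)
      (ha.trans hap) hpq ha hap hb hbq
  rcases hk.eq_or_lt with rfl | hk
  · rw [pow_one, lam0_comm, mul_comm p, add_comm (_ * a)]
    exact eulerRatio_mul_add_mul_le_or_pow_mul_self_le (by omega) (hb.trans hbq)
      (by linarith) hb hbq ha hap
  · have h₁ := mul_le_mul_of_nonneg_right (eulerRatio_le_half (n := k - 1) (by omega)) ha
    have h₂ := mul_le_mul_of_nonneg_right (eulerRatio_le_half (n := l - 1) (by omega)) hb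
    exact Or.inl (by linarith)

lemma eulerRatio_mul_add_mul_le (k l : ℕ) (hp : 0 ≤ p) (hq : 0 ≤ q) :
    eulerRatio (k - 1) * p + eulerRatio (l - 1) * q ≤ p + q :=
  add_le_add (mul_le_of_le_one_left hp (eulerRatio_le_one _))
    (mul_le_of_le_one_left hq (eulerRatio_le_one _))

-- The bound first forces `5 / 6 ≤ p + q`, which in turn makes the leaf terms at most `1 / 162`.
lemma lam0_mul_eulerRatio_le_add (hm : 6 ≤ k + l) {C : ℝ} (hp : 0 ≤ p) (hq : 0 ≤ q)
    (hr : 1 / 2 ≤ p + q) (hpq : p + q ≤ 1) (hC : C ≤ p ^ k * q ^ l)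
    (hs : lam0 k l * eulerRatio (k + l) ≤ C + lam0 k l * (leafWeight (k + l) (1 - (p + q)) *
      (eulerRatio (k - 1) * q + eulerRatio (l - 1) * p))) :
    lam0 k l * eulerRatio (k + l) ≤ C + lam0 k l * (leafWeight (k + l) (1 / 2) * (1 / 162)) := by
  set θ := leafWeight (k + l) (1 / 2)
  have hlam := lam0_pos k l
  have hθ : 0 ≤ θ := leafWeight_nonneg _ (by norm_num)
  have hleaf : leafWeight (k + l) (1 - (p + q)) *
      (eulerRatio (k - 1) * q + eulerRatio (l - 1) * p) ≤
        θ * ((2 * (1 - (p + q))) ^ 4 / 2) := by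
    have hsum := (eulerRatio_mul_add_mul_le k l hq hp).trans_eq (add_comm q p)
    exact (mul_le_mul_of_nonneg_left hsum (leafWeight_nonneg _ (by linarith))).trans
      (leafWeight_one_sub_mul_le hm hr hpq)
  replace hs := hs.trans (add_le_add_right (mul_le_mul_of_nonneg_left hleaf hlam.le) C)
  have hr' : 5 / 6 ≤ p + q := by
    by_contra! hlt
    have hcenter := hC.trans (pow_mul_pow_le_lam0_mul k l hp hq le_rfl)
    have := mul_lt_mul_of_pos_left (pow_add_leafWeight_lt_eulerRatio hm hr hlt.le) hlam
    linarith
  have hloss : (2 * (1 - (p + q))) ^ 4 / 2 ≤ 1 / 162 := by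
    have := pow_le_pow_left₀ (by linarith : 0 ≤ 2 * (1 - (p + q)))
      (by linarith : 2 * (1 - (p + q)) ≤ 1 / 3) 4
    linarith
  exact hs.trans (by gcongr)

-- `pX, qX` and `pY, qY` stand for the out- and in-densities of a vertex of `X` towards `X` and `Y`,
-- and `C` for the density of the copies centred at it.
lemma half_lt_of_lam0_mul_eulerRatio_le (hk : 1 ≤ k) (hl : 1 ≤ l) (hm : 6 ≤ k + l)
    {C α pX qX pY qY : ℝ} (hpX : 0 ≤ pX) (hqX : 0 ≤ qX) (hpY : 0 ≤ pY) (hqY : 0 ≤ qY)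
    (hX : pX + qX ≤ α) (hY : pY + qY ≤ 1 - α) (hr : 1 / 2 ≤ pX + pY + (qX + qY))
    (hs : lam0 k l * eulerRatio (k + l) ≤ C +
      lam0 k l * (leafWeight (k + l) (1 - (pX + pY + (qX + qY))) *
        (eulerRatio (k - 1) * (qX + qY) + eulerRatio (l - 1) * (pX + pY))))
    (hC : C ≤ (pX + pY) ^ k * (qX + qY) ^ l)
    (hCY : C ≤ pY ^ k * qY ^ l + lam0 k l * (leafWeight (k + l) (1 / 2) *
      (eulerRatio (k - 1) * pX + eulerRatio (l - 1) * qX))) :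
    α / 2 < qY := by
  by_contra! hqα
  have hlam := lam0_pos k l
  have hE := lam0_mul_eulerRatio_le_add hm (by linarith) (by linarith) hr (by linarith) hC hs
  rcases eulerRatio_mul_add_mul_le_or_pow_mul_pow_le (a := pX) (b := qX) (p := pX + pY)
    (q := qX + qY) hk hl hm (by linarith) hpX (by linarith) hqX (by linarith) with hw | hsmall
  · obtain ⟨s, hs0, hlt⟩ := exists_pow_div_add_leafWeight_lt_eulerRatio hm (by linarith)
      ((eulerRatio_mul_add_mul_le k l hpX hqX).trans hX) hw
    have hκ := pow_mul_pow_le_of_le_half k hl hpY hqY hY hqα hs0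
    linarith [mul_lt_mul_of_pos_left hlt hlam]
  · have hlt : 2 * (3 / 4) ^ 6 + leafWeight (k + l) (1 / 2) * (1 / 162) < eulerRatio (k + l) := by
      linarith [leafWeight_half_le_of_six_le hm, lt_eulerRatio (k + l)]
    linarith [mul_lt_mul_of_pos_left hlt hlam]

end CenterBound

section MainTheorem

variable {V : Type*} [Fintype V] {A : V → V → Prop} {k l : ℕ}

lemma alphaX_div_two_lt_rhoMIn_bigY (hk : 1 ≤ k) (hl : 1 ≤ l) (hm : 6 ≤ k + l)
    (hopp : ∀ u v, A u v → ¬ A v u) {x : V} (hx : x ∈ bigX A)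
    (hs : lam0 k l * (eulerRatio (k + l) / ((k + l : ℕ) + 1)) ≤ sVert k l A x) :
    alphaX A / 2 < rhoMIn A (bigY A) x := by
  have : Nonempty V := ⟨x⟩
  have hnonadj : ∀ w ∈ bigX A, 1 - rho A w ≤ 1 / 2 := fun w hw => by
    linarith [show 1 / 2 ≤ rho A w from hw]
  have hout := rhoPIn_add_rhoPIn_compl (A := A) (bigX A) x
  have hin := rhoMIn_add_rhoMIn_compl (A := A) (bigX A) x
  have hdeg := rhoPIn_univ_add_rhoMIn_univ hopp x
  have hY := rhoPIn_add_rhoMIn_le hopp (bigX A)ᶜ x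
  rw [muSet_compl] at hY
  rw [← mul_div_assoc, div_le_iff₀' (by positivity), Nat.cast_add] at hs
  have hvert := hs.trans (mul_sVert_le_sCond_zero_add hk hl hopp x)
  have hcenter := sCond_zero_le (k := k) (l := l) (A := A) x
  have hr : 1 / 2 ≤ rhoPIn A (bigX A) x + rhoPIn A (bigX A)ᶜ x +
      (rhoMIn A (bigX A) x + rhoMIn A (bigX A)ᶜ x) := by
    rw [hout, hin, hdeg]
    exact hx
  rw [← hdeg, ← hout, ← hin] at hvert
  rw [← hout, ← hin] at hcenter
  exact half_lt_of_lam0_mul_eulerRatio_le hk hl hm (rhoPIn_nonneg _ _) (rhoMIn_nonneg _ _)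
    (rhoPIn_nonneg _ _) (rhoMIn_nonneg _ _) (rhoPIn_add_rhoMIn_le hopp (bigX A) x) hY hr hvert
    hcenter (sCond_zero_le_add_leafWeight hk hl hopp hnonadj x)

theorem stmt14_general (hk : 1 ≤ k) (hl : 1 ≤ l) (hm : 6 ≤ k + l)
    (hopp : ∀ u v, A u v → ¬ A v u) (hX : (bigX A).Nonempty)
    (hs : ∀ x ∈ bigX A, lam0 k l * (eulerRatio (k + l) / ((k + l : ℕ) + 1)) ≤ sVert k l A x) :
    alphaX A / 2 < gammaX A := by
  obtain ⟨x, hx, hmin⟩ := (hX.image fun x => rhoMIn A (bigY A) x).csInf_mem (Set.toFinite _)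
  rw [gammaX, ← hmin]
  exact alphaX_div_two_lt_rhoMIn_bigY hk hl hm hopp hx (hs x hx)

end MainTheorem

theorem stmt14 (k l : ℕ) (hl : 1 ≤ l) (hlk : l ≤ k) (hm : 6 ≤ k + l)
    (V : Type) [Fintype V] (A : V → V → Prop)
    (hirr : Irreflexive A) (hopp : ∀ u v, A u v → ¬ A v u) (hn : 1 ≤ Fintype.card V)
    (hvert : ∀ v : V, OPT k l ≤ sVert k l A v) (hX : (bigX A).Nonempty) :
    gammaX A ≥ alphaX A / 2 :=
  (stmt14_general (hl.trans hlk) hl hm hopp hX fun x _ =>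
    (lam0_mul_eulerRatio_div_le_OPT (hl.trans hlk) l).trans (hvert x)).le
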